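/- Let k ≥ 1 and let G be a simple graph with a dominating vertex u* such that G contains no k pairwise edge-disjoint cycles (φ(G) ≤ k−1). Then e(G − u*) ≤ (k−1) + 2(k−1)²; in particular e(G − u*) < 2k². -/

import Mathlib

open scoped Classical

namespace PaperEDC

/-- `G` contains `m` pairwise edge-disjoint cycles. -/
def HasEDC {V : Type*} (G : SimpleGraph V) (m : ℕ) : Prop :=
  ∃ c : Fin m → Σ v : V, G.Walk v v,
    (∀ i, (c i).2.IsCycle) ∧
    ∀ i j, i ≠ j → ∀ e ∈ (c i).2.edges, e ∉ (c j).2.edges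

/-- `φ(G)`: the maximum number of pairwise edge-disjoint cycles in `G`. -/
noncomputable def phi {V : Type*} (G : SimpleGraph V) : ℕ := sSup {m | HasEDC G m}

/-- `K₁ ∇ H`: the join of a single new vertex with `H`. -/
def joinK1 {V : Type*} (H : SimpleGraph V) : SimpleGraph (Option V) :=
  SimpleGraph.fromRel fun a b => a = none ∨ ∃ u v, a = some u ∧ b = some v ∧ H.Adj u v

/-- `t(G)`: the number of triangles of `G`. -/
noncomputable def triCount {V : Type*} (G : SimpleGraph V) : ℕ :=
  Nat.card {s : Finset V // G.IsNClique 3 s}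

/-- A triangle-cactus: a connected graph in which every edge lies on a cycle and every
cycle is a triangle. -/
def IsTriangleCactus {V : Type*} (G : SimpleGraph V) : Prop :=
  G.Connected ∧
  (∀ e ∈ G.edgeSet, ∃ (v : V) (w : G.Walk v v), w.IsCycle ∧ e ∈ w.edges) ∧
  ∀ (v : V) (w : G.Walk v v), w.IsCycle → w.length = 3

/-- `e(G)`: the number of edges of `G`. -/
noncomputable def ecard {V : Type*} (G : SimpleGraph V) : ℕ := Nat.card G.edgeSet

/-- `ρ(G)`: the spectral radius (largest adjacency eigenvalue) of `G`. -/
noncomputable def specRad {V : Type*} [Fintype V] (G : SimpleGraph V) : ℝ :=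
  sSup {x : ℝ | ∃ f : V → ℝ, f ≠ 0 ∧ ∀ v : V, ∑ u : V, (if G.Adj v u then f u else 0) = x * f v}

def Pack {V : Type*} (G : SimpleGraph V) (E : Set (Sym2 V)) (m : ℕ) : Prop :=
  ∃ c : Fin m → Σ v : V, G.Walk v v,
    (∀ i, (c i).2.IsCycle) ∧ (∀ i, ∀ e ∈ (c i).2.edges, e ∈ E) ∧
    ∀ i j, i ≠ j → ∀ e ∈ (c i).2.edges, e ∉ (c j).2.edges

theorem Pack.zero {V : Type*} (G : SimpleGraph V) (E : Set (Sym2 V)) : Pack G E 0 :=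
  ⟨fun i => i.elim0, fun i => i.elim0, fun i => i.elim0, fun i => i.elim0⟩

theorem Pack.cons {V : Type*} {G : SimpleGraph V} {E E' : Set (Sym2 V)} {m : ℕ}
    (h : Pack G E m) {v : V} (w : G.Walk v v) (hw : w.IsCycle) (hE : E ⊆ E')
    (h1 : ∀ e ∈ w.edges, e ∈ E') (h2 : ∀ e ∈ w.edges, e ∉ E) : Pack G E' (m + 1) := by
  obtain ⟨c, hc, hce, hd⟩ := h
  refine ⟨Fin.cons ⟨v, w⟩ c, ?_, ?_, ?_⟩
  · intro i
    refine Fin.cases ?_ (fun i => ?_) i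
    · exact hw
    · exact hc i
  · intro i
    refine Fin.cases ?_ (fun i => ?_) i
    · exact h1
    · intro e he
      exact hE (hce i e he)
  · intro i j
    refine Fin.cases ?_ (fun i => ?_) i <;> refine Fin.cases ?_ (fun j => ?_) j
    · intro h; exact absurd rfl h
    · intro _ e he he'
      exact h2 e he (hce j e he')
    · intro _ e he he'
      exact h2 e he' (hce i e he)
    · intro hij e he he'
      exact hd i j (fun h => hij (by rw [h])) e he he'

theorem Pack.mono {V : Type*} {G : SimpleGraph V} {E E' : Set (Sym2 V)} {m : ℕ}
    (h : Pack G E m) (hE : E ⊆ E') : Pack G E' m := by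
  obtain ⟨c, hc, hce, hd⟩ := h
  exact ⟨c, hc, fun i e he => hE (hce i e he), hd⟩

def ES {V : Type*} (u : V) (W : Finset V) : Set (Sym2 V) :=
  {e | (∀ x ∈ e, x = u ∨ x ∈ W) ∧ ∃ x ∈ e, x ∈ W}

theorem ES_mono {V : Type*} (u : V) {W W' : Finset V} (h : W ⊆ W') : ES u W ⊆ ES u W' := by
  rintro e ⟨h1, x, hx, hxW⟩
  exact ⟨fun y hy => (h1 y hy).imp id (fun t => h t), x, hx, h hxW⟩

theorem pack_tri {V : Type*} {G : SimpleGraph V} {u x y : V} {W W' : Finset V} {m : ℕ}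
    (h : Pack G (ES u W) m) (hu : ∀ v, v ≠ u → G.Adj u v) (hxy : G.Adj x y)
    (hxu : x ≠ u) (hyu : y ≠ u) (hx : x ∉ W) (hy : y ∉ W)
    (hW : W ⊆ W') (hx' : x ∈ W') (hy' : y ∈ W') : Pack G (ES u W') (m + 1) := by
  have hne := hxy.ne
  refine h.cons (SimpleGraph.Walk.cons (hu x hxu) (SimpleGraph.Walk.cons hxy
    (SimpleGraph.Walk.cons (hu y hyu).symm SimpleGraph.Walk.nil))) ?_ (ES_mono u hW) ?_ ?_
  · rw [SimpleGraph.Walk.cons_isCycle_iff]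
    simp [SimpleGraph.Walk.isPath_def]
    grind
  · simp [ES]
    grind
  · simp [ES]
    grind

def EStar {V : Type*} (u v : V) (T : Finset V) : Set (Sym2 V) :=
  {e | ∃ t ∈ T, e = s(u, t) ∨ e = s(v, t)}

theorem pack_star {V : Type*} {G : SimpleGraph V} {u v : V} 
    (hu : ∀ v, v ≠ u → G.Adj u v) (hvu : v ≠ u) (m : ℕ) :
    ∀ T : Finset V, u ∉ T → (∀ t ∈ T, G.Adj v t) → 2 * m ≤ T.card →
      Pack G (EStar u v T) m := by
  induction m with
  | zero => intro T _ _ _; exact Pack.zero _ _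
  | succ m ih =>
    intro T huT hT hc
    obtain ⟨x, hx, y, hy, hxy⟩ := Finset.one_lt_card.1 (show 1 < T.card by omega)
    have h := ih ((T.erase x).erase y) (by grind) (by grind) (by
      rw [Finset.card_erase_of_mem (by grind), Finset.card_erase_of_mem hx]; omega)
    have hxu : x ≠ u := by grind
    have hyu : y ≠ u := by grind
    have hvx := hT x hx
    have hvy := hT y hy
    have := hvx.ne
    have := hvy.ne
    refine h.cons (SimpleGraph.Walk.cons (hu x hxu) (SimpleGraph.Walk.cons hvx.symm
      (SimpleGraph.Walk.cons hvy
      (SimpleGraph.Walk.cons (hu y hyu).symm SimpleGraph.Walk.nil)))) ?_ ?_ ?_ ?_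
    · rw [SimpleGraph.Walk.cons_isCycle_iff]
      simp [SimpleGraph.Walk.isPath_def]
      grind
    · rintro e ⟨t, ht, h⟩
      exact ⟨t, by grind, h⟩
    · simp [EStar]
      grind
    · simp [EStar]
      refine ⟨?_, ?_, ?_, ?_⟩ <;> intros <;> grind

inductive Mat {V : Type*} (G : SimpleGraph V) : Finset V → ℕ → Prop
  | nil : Mat G ∅ 0
  | cons {S : Finset V} {j : ℕ} (x y : V) (hx : x ∉ S) (hy : y ∉ S) (hxy : G.Adj x y)
      (h : Mat G S j) : Mat G (insert x (insert y S)) (j + 1)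

theorem Mat.card {V : Type*} {G : SimpleGraph V} {S : Finset V} {j : ℕ} (h : Mat G S j) :
    S.card = 2 * j := by
  induction h with
  | nil => simp
  | cons x y hx hy hxy h ih =>
    have := hxy.ne
    rw [Finset.card_insert_of_notMem (by grind), Finset.card_insert_of_notMem hy]; omega

theorem Mat.pack {V : Type*} {G : SimpleGraph V} {u : V} (hu : ∀ v, v ≠ u → G.Adj u v)
    {S : Finset V} {j : ℕ} (h : Mat G S j) : u ∉ S → Pack G (ES u S) j := by
  induction h with
  | nil => intro _; exact Pack.zero _ _
  | cons x y hx hy hxy h ih =>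
    intro hS
    exact pack_tri (ih (by grind)) hu hxy (by grind) (by grind) hx hy (by grind) (by grind)
      (by grind)

noncomputable def dg {V : Type*} (G : SimpleGraph V) (W : Finset V) (x : V) : ℕ :=
  (W.filter (G.Adj x)).card

noncomputable def sd {V : Type*} (G : SimpleGraph V) (W : Finset V) : ℕ :=
  ∑ x ∈ W, dg G W x

theorem dg_insert {V : Type*} (G : SimpleGraph V) (W : Finset V) (x y : V) (hx : x ∉ W) :
    dg G (insert x W) y = dg G W y + if G.Adj y x then 1 else 0 := by
  unfold dg
  rw [Finset.filter_insert]
  split_ifs with h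
  · rw [Finset.card_insert_of_notMem (by simp [hx])]
  · rfl

theorem sd_insert {V : Type*} (G : SimpleGraph V) (W : Finset V) (x : V) (hx : x ∉ W) :
    sd G (insert x W) = sd G W + 2 * dg G W x := by
  unfold sd
  rw [Finset.sum_insert hx]
  simp only [dg_insert G W x _ hx]
  rw [Finset.sum_add_distrib]
  simp only [SimpleGraph.irrefl, if_false, dg, Finset.card_filter, G.adj_comm _ x]
  omega

theorem aug {V : Type*} {G : SimpleGraph V} {W : Finset V} {d : ℕ}
    (hd : ∀ x ∈ W, 0 < dg G W x → 2 * d ≤ dg G W x)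
    (hN : 2 * d + 2 ≤ (W.filter (fun x => 0 < dg G W x)).card) (j : ℕ) (hj : j ≤ d + 1) :
    ∃ S, S ⊆ W ∧ Mat G S j := by
  induction j with
  | zero => exact ⟨∅, by simp, Mat.nil⟩
  | succ j ih =>
    obtain ⟨S, hSW, hM⟩ := ih (by omega)
    have hc := hM.card
    have h1 : 1 < ((W.filter (fun x => 0 < dg G W x)) \ S).card := by
      have := Finset.le_card_sdiff S (W.filter (fun x => 0 < dg G W x))
      omega
    have key : ∀ a ∈ (W.filter (fun x => 0 < dg G W x)) \ S,
        (∃ S, S ⊆ W ∧ Mat G S (j + 1)) ∨ (S.Nonempty ∧ ∀ s ∈ S, G.Adj a s) := by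
      intro a ha
      simp only [Finset.mem_sdiff, Finset.mem_filter] at ha
      obtain ⟨⟨haW, ha0⟩, haS⟩ := ha
      by_cases hex : ∃ c ∈ W, c ∉ S ∧ G.Adj a c
      · obtain ⟨c, hcW, hcS, hac⟩ := hex
        exact Or.inl ⟨_, by grind, Mat.cons a c haS hcS hac hM⟩
      · right
        have hsub : W.filter (G.Adj a) ⊆ S := by
          intro c hc
          simp only [Finset.mem_filter] at hc
          by_contra hcS
          exact hex ⟨c, hc.1, hcS, hc.2⟩
        have hda := hd a haW ha0
        have heq : W.filter (G.Adj a) = S :=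
          Finset.eq_of_subset_of_card_le hsub (by unfold dg at hda; omega)
        refine ⟨?_, ?_⟩
        · rw [← heq]; exact Finset.card_pos.1 ha0
        · intro s hs
          rw [← heq] at hs
          exact (Finset.mem_filter.1 hs).2
    obtain ⟨a, ha, b, hb, hab⟩ := Finset.one_lt_card.1 h1
    rcases key a ha with h | ⟨hne, hA⟩
    · exact h
    rcases key b hb with h | ⟨-, hB⟩
    · exact h
    simp only [Finset.mem_sdiff, Finset.mem_filter] at ha hb
    cases hM with
    | nil => simp at hne
    | @cons S' j x y hx hy hxy h =>
      have hne := hxy.ne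
      have m1 : Mat G (insert a (insert x S')) (j + 1) :=
        Mat.cons a x (by grind) hx (hA x (by grind)) h
      exact ⟨_, by grind, Mat.cons b y (by grind) (by grind) (hB y (by grind)) m1⟩

theorem exists_edge {V : Type*} {G : SimpleGraph V} {W : Finset V} (h : 0 < sd G W) :
    ∃ x ∈ W, ∃ y ∈ W, G.Adj x y := by
  by_contra hcon
  push Not at hcon
  have : sd G W = 0 := by
    unfold sd
    refine Finset.sum_eq_zero fun x hx => ?_
    unfold dg
    rw [Finset.card_eq_zero, Finset.filter_eq_empty_iff]
    exact fun y hy => hcon x hx y hy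
  omega

theorem main_pack {V : Type*} {G : SimpleGraph V} {u : V} (hu : ∀ v, v ≠ u → G.Adj u v)
    (m : ℕ) : ∀ W : Finset V, u ∉ W → 2 * (m * (2 * m + 1)) < sd G W →
      Pack G (ES u W) (m + 1) := by
  induction m with
  | zero =>
    intro W huW h
    obtain ⟨x, hx, y, hy, hxy⟩ := exists_edge (show 0 < sd G W by omega)
    exact pack_tri (W := ∅) (Pack.zero G _) hu hxy (by grind) (by grind) (by simp) (by simp)
      (by simp) hx hy
  | succ m ih =>
    intro W huW h
    by_cases hstar : ∃ v ∈ W, 2 * (m + 2) ≤ dg G W v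
    · obtain ⟨v, hv, hdv⟩ := hstar
      refine (pack_star (v := v) hu (by grind) (m + 2) (W.filter (G.Adj v)) (by grind)
        (by grind) hdv).mono ?_
      rintro e ⟨t, ht, rfl | rfl⟩ <;> simp [ES] <;> grind
    push Not at hstar
    by_cases hlow : ∃ x ∈ W, ∃ y ∈ W, G.Adj x y ∧ dg G W x + dg G W y ≤ 4 * m + 4
    · obtain ⟨x, hx, y, hy, hxy, hd⟩ := hlow
      have hne := hxy.ne
      set W' := (W.erase x).erase y with hW'
      have hyW' : y ∉ W' := by grind
      have hxW' : x ∉ insert y W' := by grind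
      have hWe : W = insert x (insert y W') := by grind
      have e1 := sd_insert G _ x hxW'
      have e2 := sd_insert G _ y hyW'
      have e3 := dg_insert G (insert y W') x x hxW'
      have e4 := dg_insert G (insert y W') x y hxW'
      have e5 := dg_insert G W' y x hyW'
      have e6 := dg_insert G W' y y hyW'
      rw [← hWe] at e1 e3 e4
      simp only [SimpleGraph.irrefl, hxy, hxy.symm, if_true, if_false] at e3 e4 e5 e6
      have hp := ih W' (by grind) (by nlinarith)
      exact pack_tri hp hu hxy (by grind) (by grind) (by grind) hyW' (by grind) hx hy
    push Not at hlow
    have hdeg : ∀ x ∈ W, 0 < dg G W x → 2 * (m + 1) ≤ dg G W x := by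
      intro x hx h0
      obtain ⟨y, hy⟩ := Finset.card_pos.1 h0
      rw [Finset.mem_filter] at hy
      have := hlow x hx y hy.1 hy.2
      have := hstar y hy.1
      omega
    have hpos : ∀ x ∈ W, ∀ y ∈ W, G.Adj x y → 0 < dg G W x := fun x hx y hy hxy =>
      Finset.card_pos.2 ⟨y, Finset.mem_filter.2 ⟨hy, hxy⟩⟩
    have hbig : ∃ x ∈ W, 2 * (m + 1) + 1 ≤ dg G W x := by
      obtain ⟨x, hx, y, hy, hxy⟩ := exists_edge (show 0 < sd G W by omega)
      have := hlow x hx y hy hxy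
      by_cases h : 2 * (m + 1) + 1 ≤ dg G W x
      · exact ⟨x, hx, h⟩
      · exact ⟨y, hy, by omega⟩
    obtain ⟨x, hx, hdx⟩ := hbig
    have hN : 2 * (m + 1) + 2 ≤ (W.filter (fun x => 0 < dg G W x)).card := by
      have hsub : insert x (W.filter (G.Adj x)) ⊆ W.filter (fun x => 0 < dg G W x) := by
        intro z hz
        rw [Finset.mem_insert, Finset.mem_filter] at hz
        rw [Finset.mem_filter]
        rcases hz with rfl | hz
        · exact ⟨hx, by omega⟩
        · exact ⟨hz.1, hpos z hz.1 x hx hz.2.symm⟩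
      have := Finset.card_le_card hsub
      rw [Finset.card_insert_of_notMem (by simp)] at this
      unfold dg at hdx
      omega
    obtain ⟨S, hSW, hM⟩ := aug hdeg hN (m + 2) (by omega)
    exact (hM.pack hu (fun h => huW (hSW h))).mono (ES_mono u hSW)

theorem edc_bdd {V : Type*} [Fintype V] (G : SimpleGraph V) : BddAbove {m | HasEDC G m} := by
  refine ⟨Fintype.card (Sym2 V), ?_⟩
  rintro m ⟨c, hc, hd⟩
  have hex : ∀ i, ∃ e, e ∈ (c i).2.edges := by
    intro i
    have h3 := (hc i).three_le_length
    rw [← SimpleGraph.Walk.length_edges] at h3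
    exact List.exists_mem_of_length_pos (by omega)
  choose f hf using hex
  have hinj : Function.Injective f := by
    intro i j hij
    by_contra hne
    exact hd i j hne (f i) (hf i) (hij ▸ hf j)
  simpa using Fintype.card_le_of_injective f hinj

theorem sd_eq {V : Type*} [Fintype V] (G : SimpleGraph V) (u : V) :
    sd G (Finset.univ.erase u) = 2 * ecard (G.induce ({u}ᶜ : Set V)) := by
  unfold ecard
  rw [Nat.card_eq_fintype_card, ← SimpleGraph.edgeFinset_card,
    ← SimpleGraph.sum_degrees_eq_twice_card_edges]
  unfold sd
  refine Finset.sum_bij' (fun x hx => (⟨x, by simpa using hx⟩ : ({u}ᶜ : Set V)))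
    (fun x _ => x.1) ?_ ?_ ?_ ?_ ?_
  · simp
  · intro x _
    have h : x.1 ≠ u := fun h => x.2 h
    simpa using h
  · simp
  · simp
  · intro x hx
    unfold dg
    rw [← SimpleGraph.card_neighborFinset_eq_degree]
    refine Finset.card_bij' (fun y hy => (⟨y, by simp at hy; simpa using hy.1⟩ : ({u}ᶜ : Set V)))
      (fun y _ => y.1) ?_ ?_ ?_ ?_
    · intro y hy; simp at hy; simp [hy]
    · intro y hy
      have h : y.1 ≠ u := fun h => y.2 h
      simp at hy; simp [hy, h]
    · simp
    · simp

/-- If `G` has a dominating vertex `u*` and no `k` pairwise edge-disjoint cycles, then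
`e(G - u*) ≤ (k-1) + 2(k-1)²` and in particular `e(G - u*) < 2k²`. -/
theorem ecard_minus_dominating_lt {V : Type*} [Fintype V] (k : ℕ) (hk : 1 ≤ k)
    (G : SimpleGraph V) (u : V) (hu : ∀ v, v ≠ u → G.Adj u v) (hphi : phi G ≤ k - 1) :
    ecard (G.induce ({u}ᶜ : Set V)) ≤ (k - 1) + 2 * (k - 1) ^ 2 ∧
    ecard (G.induce ({u}ᶜ : Set V)) < 2 * k ^ 2 := by
  obtain ⟨m, rfl⟩ : ∃ m, k = m + 1 := ⟨k - 1, by omega⟩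
  simp only [Nat.add_sub_cancel] at hphi ⊢
  have h1 : ecard (G.induce ({u}ᶜ : Set V)) ≤ m + 2 * m ^ 2 := by
    by_contra hcon
    push Not at hcon
    obtain ⟨c, hc, -, hd⟩ := main_pack hu m (Finset.univ.erase u) (by simp)
      (by rw [sd_eq]; nlinarith)
    have : m + 1 ≤ phi G := le_csSup (edc_bdd G) ⟨c, hc, hd⟩
    omega
  exact ⟨h1, by nlinarith⟩

end PaperEDC
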